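/- arXiv:1108.2913 — 2 statements merged into one kernel-verified Lean document; each statement's English description precedes it below -/
import Mathlib

section
/- Let T and X be measurable spaces, let 𝕄 be a finite signed measure on T, and let m : T → (finite signed measures on X) be a family such that for every measurable E ⊆ X the map t ↦ (m t)(E) is measurable, and such that there is γ > 0 with ‖m t‖ ≤ γ for all t ∈ T. Then the set function κ defined on measurable sets E ⊆ X by κ(E) = ∫_T (m t)(E) d𝕄(t) is a finite signed measure on X: κ(∅) = 0 and κ is countably additive. -/
open MeasureTheory

/-- The integral of a real-valued function with respect to a finite signed measure,
defined via the Jordan decomposition: `∫ f dμ = ∫ f dμ⁺ − ∫ f dμ⁻`. -/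
noncomputable def sintegral {X : Type*} [MeasurableSpace X] (μ : SignedMeasure X) (f : X → ℝ) : ℝ :=
  (∫ x, f x ∂μ.toJordanDecomposition.posPart) - ∫ x, f x ∂μ.toJordanDecomposition.negPart

/-- A function is integrable with respect to a finite signed measure `μ` if it is
integrable with respect to the total variation measure `|μ| = μ⁺ + μ⁻`. -/
def SIntegrable {X : Type*} [MeasurableSpace X] (μ : SignedMeasure X) (f : X → ℝ) : Prop :=
  Integrable f μ.totalVariation

/-- The total variation norm of a finite signed measure: `‖μ‖ = |μ|(X)`. -/
noncomputable def tvNorm {X : Type*} [MeasurableSpace X] (μ : SignedMeasure X) : ℝ :=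
  (μ.totalVariation Set.univ).toReal

/-! For fixed `t`, every partial sum of `∑ m t (E n)` is the value of `m t` on a finite union, so it
is bounded by `‖m t‖` whatever the number of terms. Dominated convergence along the finite sets of
indices therefore gives countable additivity of `E ↦ ∫ m t E`, for each Jordan part of `𝕄`. -/

section Mixture

variable {T X V : Type*} [MeasurableSpace T] [MeasurableSpace X]
  [NormedAddCommGroup V] {μ : Measure T} {m : T → VectorMeasure X V} {g : T → ℝ}

theorem integrable_vectorMeasure_apply
    (hm : ∀ E, MeasurableSet E → AEStronglyMeasurable (fun t => m t E) μ)
    (hg : Integrable g μ) (hle : ∀ᵐ t ∂μ, ∀ E, ‖m t E‖ ≤ g t) (E : Set X) :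
    Integrable (fun t => m t E) μ := by
  by_cases hE : MeasurableSet E
  · exact hg.mono' (hm E hE) (hle.mono fun t ht => ht E)
  · simp [VectorMeasure.not_measurable _ hE]

variable [NormedSpace ℝ V]

theorem hasSum_integral_of_norm_sum_le {ι : Type*} [Countable ι] {F : ι → T → V} {f : T → V}
    (hF : ∀ i, AEStronglyMeasurable (F i) μ) (hg : Integrable g μ)
    (hle : ∀ s : Finset ι, ∀ᵐ t ∂μ, ‖∑ i ∈ s, F i t‖ ≤ g t)
    (hsum : ∀ᵐ t ∂μ, HasSum (fun i => F i t) (f t)) :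
    HasSum (fun i => ∫ t, F i t ∂μ) (∫ t, f t ∂μ) := by
  have hint (i : ι) : Integrable (F i) μ :=
    hg.mono' (hF i) (by simpa only [Finset.sum_singleton] using hle {i})
  have hpartial (s : Finset ι) : ∑ i ∈ s, ∫ t, F i t ∂μ = ∫ t, ∑ i ∈ s, F i t ∂μ :=
    (integral_finsetSum s fun i _ => hint i).symm
  simp only [HasSum, hpartial]
  exact tendsto_integral_filter_of_dominated_convergence g
    (.of_forall fun s => s.aestronglyMeasurable_fun_sum fun i _ => hF i) (.of_forall hle) hg hsum

theorem hasSum_integral_vectorMeasure_apply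
    (hm : ∀ E, MeasurableSet E → AEStronglyMeasurable (fun t => m t E) μ)
    (hg : Integrable g μ) (hle : ∀ᵐ t ∂μ, ∀ E, ‖m t E‖ ≤ g t)
    {E : ℕ → Set X} (hE : ∀ n, MeasurableSet (E n)) (hd : Pairwise (Function.onFun Disjoint E)) :
    HasSum (fun n => ∫ t, m t (E n) ∂μ) (∫ t, m t (⋃ n, E n) ∂μ) := by
  have hpartial (s : Finset ℕ) (t : T) : ∑ n ∈ s, m t (E n) = m t (⋃ n ∈ s, E n) :=
    ((m t).of_biUnion_finset (fun _ _ _ _ hij => hd hij) fun n _ => hE n).symm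
  refine hasSum_integral_of_norm_sum_le (fun n => hm _ (hE n)) hg (fun s => ?_)
    (ae_of_all μ fun t => (m t).m_iUnion hE hd)
  filter_upwards [hle] with t ht
  exact hpartial s t ▸ ht _

/-- The mixture `E ↦ ∫ m t E ∂μ` of a family `m` of vector measures with respect to a positive
measure `μ`. The domination by an integrable `g` makes it countably additive. It
vanishes on non-measurable sets, as `VectorMeasure` demands, because each `m t` does. -/
noncomputable def mixture (μ : Measure T) (m : T → VectorMeasure X V)
    (hm : ∀ E, MeasurableSet E → AEStronglyMeasurable (fun t => m t E) μ)
    (hg : Integrable g μ) (hle : ∀ᵐ t ∂μ, ∀ E, ‖m t E‖ ≤ g t) : VectorMeasure X V where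
  measureOf' E := ∫ t, m t E ∂μ
  empty' := by simp only [VectorMeasure.empty, integral_zero]
  not_measurable' E hE := by simp only [VectorMeasure.not_measurable _ hE, integral_zero]
  m_iUnion' _ hE hd := hasSum_integral_vectorMeasure_apply hm hg hle hE hd

end Mixture

theorem norm_apply_le_tvNorm {X : Type*} [MeasurableSpace X] (μ : SignedMeasure X) (E : Set X) :
    ‖μ E‖ ≤ tvNorm μ :=
  (μ.norm_le_totalVariation E).trans (measureReal_mono E.subset_univ)

theorem stmt8_general {T X : Type*} [MeasurableSpace T] [MeasurableSpace X]
    (𝕄 : SignedMeasure T) (m : T → SignedMeasure X)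
    (hm : ∀ E, MeasurableSet E → AEStronglyMeasurable (fun t => m t E) 𝕄.totalVariation)
    {g : T → ℝ} (hg : SIntegrable 𝕄 g) (hle : ∀ᵐ t ∂𝕄.totalVariation, tvNorm (m t) ≤ g t) :
    ∃ κ : SignedMeasure X, ∀ E,
      SIntegrable 𝕄 (fun t => m t E) ∧ κ E = sintegral 𝕄 fun t => m t E := by
  have hdom : ∀ᵐ t ∂𝕄.totalVariation, ∀ E, ‖m t E‖ ≤ g t :=
    hle.mono fun t ht E => (norm_apply_le_tvNorm (m t) E).trans ht
  let mixtureOfLE (ν : Measure T) (hν : ν ≤ 𝕄.totalVariation) : SignedMeasure X :=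
    mixture ν m (fun E hE => (hm E hE).mono_measure hν) (hg.mono_measure hν) (ae_mono hν hdom)
  refine ⟨mixtureOfLE 𝕄.toJordanDecomposition.posPart (Measure.le_add_right le_rfl) -
    mixtureOfLE 𝕄.toJordanDecomposition.negPart (Measure.le_add_left le_rfl), fun E => ⟨?_, rfl⟩⟩
  exact integrable_vectorMeasure_apply hm hg hdom E

/-- If `m : T → (signed measures on X)` has `t ↦ (m t)(E)` measurable for each
measurable `E` and `‖m t‖ ≤ γ` uniformly, then `E ↦ ∫_T (m t)(E) d𝕄(t)` is a finite signed
measure: it vanishes on `∅` and is countably additive. -/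
theorem stmt8 {T X : Type*} [MeasurableSpace T] [MeasurableSpace X]
    (𝕄 : SignedMeasure T) (m : T → SignedMeasure X)
    (hmeas : ∀ E : Set X, MeasurableSet E → Measurable fun t => m t E)
    (γ : ℝ) (hγ : 0 < γ) (hbound : ∀ t, tvNorm (m t) ≤ γ) :
    (sintegral 𝕄 (fun t => m t (∅ : Set X)) = 0) ∧
    (∀ E : ℕ → Set X, (∀ n, MeasurableSet (E n)) →
      (Pairwise fun i j => Disjoint (E i) (E j)) →
      HasSum (fun n => sintegral 𝕄 fun t => m t (E n))
        (sintegral 𝕄 fun t => m t (⋃ n, E n))) := by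
  obtain ⟨κ, hκ⟩ := stmt8_general 𝕄 m (fun E hE => (hmeas E hE).aestronglyMeasurable)
    (integrable_const γ) (ae_of_all _ hbound)
  simp only [← (hκ _).2]
  exact ⟨κ.empty, fun _ hE hd => κ.m_iUnion hE hd⟩
end

section
/- Let T and X be measurable spaces, 𝕄 a finite signed measure on T, and m : T → (finite signed measures on X) a family such that for every measurable E ⊆ X the map t ↦ (m t)(E) is measurable. Suppose there are a subset B ⊆ X and constants γ, β > 0 such that each m t is supported by B with ‖m t‖ ≤ γ, and let f : X → ℝ be measurable with |f(x)| ≤ β for all x ∈ B. Let κ be the finite signed measure on X defined by κ(E) = ∫_T (m t)(E) d𝕄(t). Then the function t ↦ ∫ f d(m t) is measurable and 𝕄-integrable, and ∫_T (∫_X f d(m t)) d𝕄(t) = ∫_X f dκ. -/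
open MeasureTheory

/-!
For a simple function the identity is linearity of the integral together with the definition of
`κ`, and a measurable `f` is a pointwise limit of simple functions `s n` with `|s n| ≤ 2 |f|`, so
dominated convergence, once against `m t` and once against `𝕄`, gives the general case. Dominated
convergence against `κ` also needs `f` to be `κ`-integrable. Flipping the sign of `|s n|` on a
Hahn set of `κ` turns `∫ |s n| d|κ|` into the `κ`-integral of a simple function, hence into an
iterated integral; this bounds it independently of `n`, and Fatou's lemma passes the bound to `f`.
-/

open Filter Topology

section SignedIntegral

variable {X : Type*} [MeasurableSpace X] {μ : SignedMeasure X}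

lemma posPart_le_totalVariation (μ : SignedMeasure X) :
    μ.toJordanDecomposition.posPart ≤ μ.totalVariation :=
  Measure.le_add_right le_rfl

lemma negPart_le_totalVariation (μ : SignedMeasure X) :
    μ.toJordanDecomposition.negPart ≤ μ.totalVariation :=
  Measure.le_add_left le_rfl

lemma SIntegrable.posPart {f : X → ℝ} (hf : SIntegrable μ f) :
    Integrable f μ.toJordanDecomposition.posPart :=
  hf.mono_measure (posPart_le_totalVariation μ)

lemma SIntegrable.negPart {f : X → ℝ} (hf : SIntegrable μ f) :
    Integrable f μ.toJordanDecomposition.negPart :=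
  hf.mono_measure (negPart_le_totalVariation μ)

lemma abs_sintegral_le {f : X → ℝ} (hf : SIntegrable μ f) :
    |sintegral μ f| ≤ ∫ x, |f x| ∂μ.totalVariation :=
  calc |sintegral μ f|
      ≤ |∫ x, f x ∂μ.toJordanDecomposition.posPart| +
          |∫ x, f x ∂μ.toJordanDecomposition.negPart| := abs_sub _ _
    _ ≤ (∫ x, |f x| ∂μ.toJordanDecomposition.posPart) +
          ∫ x, |f x| ∂μ.toJordanDecomposition.negPart :=
        add_le_add abs_integral_le_integral_abs abs_integral_le_integral_abs
    _ = ∫ x, |f x| ∂μ.totalVariation := (integral_add_measure hf.posPart.abs hf.negPart.abs).symm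

lemma SIntegrable.integral_abs_le_mul {f g : X → ℝ} {c : ℝ} (hf : SIntegrable μ f)
    (hg : ∀ x, |g x| ≤ c * |f x|) :
    ∫ x, |g x| ∂μ.totalVariation ≤ c * ∫ x, |f x| ∂μ.totalVariation := by
  rw [← integral_const_mul]
  exact integral_mono_of_nonneg (ae_of_all _ fun x => abs_nonneg (g x)) (hf.abs.const_mul c)
    (ae_of_all _ hg)

lemma sintegral_finsetSum {ι : Type*} (S : Finset ι) {f : ι → X → ℝ}
    (hf : ∀ i ∈ S, SIntegrable μ (f i)) :
    sintegral μ (fun x => ∑ i ∈ S, f i x) = ∑ i ∈ S, sintegral μ (f i) := by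
  simp only [sintegral]
  rw [integral_finsetSum S fun i hi => (hf i hi).posPart,
    integral_finsetSum S fun i hi => (hf i hi).negPart, Finset.sum_sub_distrib]

lemma sintegral_mul_const (f : X → ℝ) (c : ℝ) :
    sintegral μ (fun x => f x * c) = sintegral μ f * c := by
  simp only [sintegral, integral_mul_const, sub_mul]

lemma sIntegrable_simpleFunc (μ : SignedMeasure X) (s : SimpleFunc X ℝ) : SIntegrable μ s :=
  SimpleFunc.integrable_of_isFiniteMeasure s

lemma sintegral_simpleFunc (μ : SignedMeasure X) (s : SimpleFunc X ℝ) :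
    sintegral μ s = ∑ y ∈ s.range, μ (s ⁻¹' {y}) * y := by
  rw [sintegral, s.integral_eq_sum (sIntegrable_simpleFunc μ s).posPart,
    s.integral_eq_sum (sIntegrable_simpleFunc μ s).negPart, ← Finset.sum_sub_distrib]
  refine Finset.sum_congr rfl fun y _ => ?_
  rw [μ.apply_eq_posPart_real_sub_negPart_real (s.measurableSet_fiber y), smul_eq_mul,
    smul_eq_mul, sub_mul]

lemma tendsto_sintegral_of_dominated_convergence {F : ℕ → X → ℝ} {f bound : X → ℝ}
    (hF : ∀ n, AEStronglyMeasurable (F n) μ.totalVariation) (hbound : SIntegrable μ bound)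
    (hF_le : ∀ n, ∀ᵐ x ∂μ.totalVariation, |F n x| ≤ bound x)
    (hlim : ∀ᵐ x ∂μ.totalVariation, Tendsto (fun n => F n x) atTop (𝓝 (f x))) :
    Tendsto (fun n => sintegral μ (F n)) atTop (𝓝 (sintegral μ f)) := by
  have hpos := posPart_le_totalVariation μ
  have hneg := negPart_le_totalVariation μ
  exact (tendsto_integral_of_dominated_convergence bound (fun n => (hF n).mono_measure hpos)
    hbound.posPart (fun n => ae_mono hpos (hF_le n)) (ae_mono hpos hlim)).sub
    (tendsto_integral_of_dominated_convergence bound (fun n => (hF n).mono_measure hneg)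
      hbound.negPart (fun n => ae_mono hneg (hF_le n)) (ae_mono hneg hlim))

open Classical in
lemma exists_sintegral_piecewise_neg_eq_integral_totalVariation (μ : SignedMeasure X) :
    ∃ N : Set X, MeasurableSet N ∧ ∀ f : X → ℝ, SIntegrable μ f →
      sintegral μ (N.piecewise (fun x => -f x) f) = ∫ x, f x ∂μ.totalVariation := by
  obtain ⟨N, hN, hpos, hneg⟩ := μ.toJordanDecomposition.mutuallySingular
  refine ⟨N, hN, fun f hf => ?_⟩
  have hpos_eq : N.piecewise (fun x => -f x) f =ᵐ[μ.toJordanDecomposition.posPart] f := by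
    filter_upwards [compl_mem_ae_iff.2 hpos] with x hx using Set.piecewise_eq_of_notMem _ _ _ hx
  have hneg_eq : N.piecewise (fun x => -f x) f =ᵐ[μ.toJordanDecomposition.negPart]
      fun x => -f x := by
    filter_upwards [mem_ae_iff.2 hneg] with x hx using Set.piecewise_eq_of_mem _ _ _ hx
  rw [sintegral, integral_congr_ae hpos_eq, integral_congr_ae hneg_eq, integral_neg, sub_neg_eq_add,
    SignedMeasure.totalVariation, integral_add_measure hf.posPart hf.negPart]

lemma sIntegrable_of_ae_abs_le {f : X → ℝ} {β : ℝ} (hf : Measurable f)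
    (hfβ : ∀ᵐ x ∂μ.totalVariation, |f x| ≤ β) : SIntegrable μ f :=
  Integrable.of_bound hf.aestronglyMeasurable β hfβ

lemma integral_abs_le_mul_tvNorm {f : X → ℝ} {β : ℝ}
    (hfβ : ∀ᵐ x ∂μ.totalVariation, |f x| ≤ β) :
    ∫ x, |f x| ∂μ.totalVariation ≤ β * tvNorm μ := by
  have hle : ∀ᵐ x ∂μ.totalVariation, ‖|f x|‖ ≤ β := by simpa only [Real.norm_eq_abs, abs_abs]
  exact (le_abs_self _).trans (norm_integral_le_of_norm_le_const hle)

lemma abs_apply_le_tvNorm (μ : SignedMeasure X) (E : Set X) : |μ E| ≤ tvNorm μ :=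
  (μ.norm_le_totalVariation E).trans (measureReal_mono (Set.subset_univ E))

lemma ae_totalVariation_map {Y : Type*} [MeasurableSpace Y] (ν : SignedMeasure Y) {φ : Y → X}
    (hφ : Measurable φ) {p : X → Prop} (hp : MeasurableSet {x | p x})
    (h : ∀ᵐ y ∂ν.totalVariation, p (φ y)) : ∀ᵐ x ∂SignedMeasure.totalVariation (ν.map φ), p x := by
  rw [SignedMeasure.totalVariation_eq_variation] at h ⊢
  exact ae_mono VectorMeasure.variation_map_le ((ae_map_iff hφ.aemeasurable hp).2 h)

lemma ae_totalVariation_of_eq_map_subtype_val {B : Set X}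
    (hμ : ∃ ν : SignedMeasure B, μ = ν.map (Subtype.val : B → X)) {p : X → Prop}
    (hp : MeasurableSet {x | p x}) (h : ∀ x ∈ B, p x) : ∀ᵐ x ∂μ.totalVariation, p x := by
  obtain ⟨ν, rfl⟩ := hμ
  exact ae_totalVariation_map ν measurable_subtype_coe hp (ae_of_all _ fun x => h x x.2)

end SignedIntegral

section Approximation

variable {X : Type*} [MeasurableSpace X]

lemma exists_simpleFunc_tendsto_abs_le {f : X → ℝ} (hf : Measurable f) :
    ∃ s : ℕ → SimpleFunc X ℝ,
      (∀ n x, |s n x| ≤ 2 * |f x|) ∧ ∀ x, Tendsto (fun n => s n x) atTop (𝓝 (f x)) := by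
  refine ⟨SimpleFunc.approxOn f hf Set.univ 0 (Set.mem_univ 0), fun n x => ?_, fun x => ?_⟩
  · rw [two_mul]
    exact SimpleFunc.norm_approxOn_zero_le hf (Set.mem_univ 0) x n
  · exact SimpleFunc.tendsto_approxOn hf (Set.mem_univ 0) (subset_closure (Set.mem_univ _))

lemma SIntegrable.tendsto_sintegral_simpleFunc {μ : SignedMeasure X} {f : X → ℝ} {c : ℝ}
    {s : ℕ → SimpleFunc X ℝ} (hf : SIntegrable μ f) (hs_le : ∀ n x, |s n x| ≤ c * |f x|)
    (hs_lim : ∀ x, Tendsto (fun n => s n x) atTop (𝓝 (f x))) :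
    Tendsto (fun n => sintegral μ (s n)) atTop (𝓝 (sintegral μ f)) :=
  tendsto_sintegral_of_dominated_convergence (fun n => (s n).aestronglyMeasurable)
    (hf.abs.const_mul c) (fun n => ae_of_all _ (hs_le n)) (ae_of_all _ hs_lim)

lemma integrable_of_tendsto_of_integral_norm_le {E : Type*} [NormedAddCommGroup E] {ρ : Measure X}
    {F : ℕ → X → E} {f : X → E} {C : ℝ} (hF : ∀ n, Integrable (F n) ρ)
    (hC : ∀ n, ∫ x, ‖F n x‖ ∂ρ ≤ C)
    (hlim : ∀ᵐ x ∂ρ, Tendsto (fun n => F n x) atTop (𝓝 (f x))) : Integrable f ρ := by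
  refine ⟨aestronglyMeasurable_of_tendsto_ae _ (fun n => (hF n).aestronglyMeasurable) hlim, ?_⟩
  have hbound : ∀ n, ∫⁻ x, ‖F n x‖ₑ ∂ρ ≤ ENNReal.ofReal C := fun n => by
    rw [← ofReal_integral_norm_eq_lintegral_enorm (hF n)]
    exact ENNReal.ofReal_le_ofReal (hC n)
  calc ∫⁻ x, ‖f x‖ₑ ∂ρ
      = ∫⁻ x, liminf (fun n => ‖F n x‖ₑ) atTop ∂ρ :=
        lintegral_congr_ae (hlim.mono fun x hx => hx.enorm.liminf_eq.symm)
    _ ≤ liminf (fun n => ∫⁻ x, ‖F n x‖ₑ ∂ρ) atTop :=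
        lintegral_liminf_le' fun n => (hF n).aestronglyMeasurable.enorm
    _ ≤ ENNReal.ofReal C := liminf_le_of_le (by isBoundedDefault) fun b hb => by
        obtain ⟨n, hn⟩ := hb.exists
        exact hn.trans (hbound n)
    _ < ⊤ := ENNReal.ofReal_lt_top

end Approximation

section Mixture

variable {T X : Type*} [MeasurableSpace T] [MeasurableSpace X]
  {𝕄 : SignedMeasure T} {m : T → SignedMeasure X} {κ : SignedMeasure X} {f : X → ℝ} {H : T → ℝ}

/-- The signed measure `κ` is the mixture `∫ m t d𝕄(t)` of the family `m`, in the setwise sense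
`κ E = ∫ (m t) E d𝕄(t)`. Integrability of `t ↦ m t E` is part of the notion, since otherwise the
right-hand side is a junk value. -/
def IsMixture (𝕄 : SignedMeasure T) (m : T → SignedMeasure X) (κ : SignedMeasure X) : Prop :=
  ∀ E, MeasurableSet E →
    SIntegrable 𝕄 (fun t => m t E) ∧ κ E = sintegral 𝕄 fun t => m t E

lemma isMixture_of_tvNorm_le {γ : ℝ}
    (hmeas : ∀ E : Set X, MeasurableSet E → Measurable fun t => m t E)
    (hm : ∀ t, tvNorm (m t) ≤ γ)
    (hκ : ∀ E : Set X, MeasurableSet E → κ E = sintegral 𝕄 fun t => m t E) :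
    IsMixture 𝕄 m κ := fun E hE =>
  ⟨sIntegrable_of_ae_abs_le (hmeas E hE)
    (ae_of_all _ fun t => (abs_apply_le_tvNorm (m t) E).trans (hm t)), hκ E hE⟩

lemma measurable_sintegral (hmeas : ∀ E : Set X, MeasurableSet E → Measurable fun t => m t E)
    (hf : Measurable f) (hfm : ∀ t, SIntegrable (m t) f) :
    Measurable fun t => sintegral (m t) f := by
  obtain ⟨s, hs_le, hs_lim⟩ := exists_simpleFunc_tendsto_abs_le hf
  have hs_meas : ∀ n, Measurable fun t => sintegral (m t) (s n) := fun n => by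
    simp only [sintegral_simpleFunc]
    exact Finset.measurable_fun_sum _ fun y _ =>
      (hmeas _ ((s n).measurableSet_fiber y)).mul_const y
  exact measurable_of_tendsto_metrizable hs_meas
    (tendsto_pi_nhds.2 fun t => (hfm t).tendsto_sintegral_simpleFunc hs_le hs_lim)

namespace IsMixture

lemma sIntegrable_sintegral_simpleFunc (hκ : IsMixture 𝕄 m κ) (s : SimpleFunc X ℝ) :
    SIntegrable 𝕄 fun t => sintegral (m t) s := by
  simp only [sintegral_simpleFunc]
  exact integrable_finsetSum _ fun y _ => (hκ _ (s.measurableSet_fiber y)).1.mul_const y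

lemma sintegral_sintegral_simpleFunc (hκ : IsMixture 𝕄 m κ) (s : SimpleFunc X ℝ) :
    sintegral 𝕄 (fun t => sintegral (m t) s) = sintegral κ s := by
  simp only [sintegral_simpleFunc]
  rw [sintegral_finsetSum _ fun y _ => (hκ _ (s.measurableSet_fiber y)).1.mul_const y]
  refine Finset.sum_congr rfl fun y _ => ?_
  rw [sintegral_mul_const, (hκ _ (s.measurableSet_fiber y)).2]

lemma integral_abs_simpleFunc_le (hκ : IsMixture 𝕄 m κ) (s : SimpleFunc X ℝ)
    (hH : SIntegrable 𝕄 H) (hsH : ∀ t, ∫ x, |s x| ∂(m t).totalVariation ≤ H t) :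
    ∫ x, |s x| ∂κ.totalVariation ≤ ∫ t, H t ∂𝕄.totalVariation := by
  classical
  obtain ⟨N, hN, hN_eq⟩ := exists_sintegral_piecewise_neg_eq_integral_totalVariation κ
  let g : SimpleFunc X ℝ := .piecewise N hN (-s.map abs) (s.map abs)
  have hg_abs : ∀ x, |g x| = |s x| := fun x => by
    by_cases hx : x ∈ N <;> simp [g, hx]
  have hg_le : ∀ t, |sintegral (m t) g| ≤ H t := fun t =>
    (abs_sintegral_le (sIntegrable_simpleFunc (m t) g)).trans
      (by simpa only [hg_abs] using hsH t)
  calc ∫ x, |s x| ∂κ.totalVariation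
      = sintegral κ g := (hN_eq _ (sIntegrable_simpleFunc κ (s.map abs))).symm
    _ = sintegral 𝕄 fun t => sintegral (m t) g := (hκ.sintegral_sintegral_simpleFunc g).symm
    _ ≤ ∫ t, |sintegral (m t) g| ∂𝕄.totalVariation :=
        (le_abs_self _).trans (abs_sintegral_le (hκ.sIntegrable_sintegral_simpleFunc g))
    _ ≤ ∫ t, H t ∂𝕄.totalVariation :=
        integral_mono (hκ.sIntegrable_sintegral_simpleFunc g).abs hH hg_le

lemma sIntegrable (hκ : IsMixture 𝕄 m κ) (hf : Measurable f) (hfm : ∀ t, SIntegrable (m t) f)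
    (hH : SIntegrable 𝕄 H) (hfH : ∀ t, ∫ x, |f x| ∂(m t).totalVariation ≤ H t) :
    SIntegrable κ f := by
  obtain ⟨s, hs_le, hs_lim⟩ := exists_simpleFunc_tendsto_abs_le hf
  have hsH : ∀ n t, ∫ x, |s n x| ∂(m t).totalVariation ≤ 2 * H t := fun n t =>
    ((hfm t).integral_abs_le_mul (hs_le n)).trans (mul_le_mul_of_nonneg_left (hfH t) zero_le_two)
  exact integrable_of_tendsto_of_integral_norm_le (fun n => sIntegrable_simpleFunc κ (s n))
    (fun n => hκ.integral_abs_simpleFunc_le (s n) (hH.const_mul 2) (hsH n)) (ae_of_all _ hs_lim)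

lemma sintegral_sintegral (hκ : IsMixture 𝕄 m κ) (hf : Measurable f)
    (hfm : ∀ t, SIntegrable (m t) f) (hH : SIntegrable 𝕄 H)
    (hfH : ∀ t, ∫ x, |f x| ∂(m t).totalVariation ≤ H t) :
    sintegral 𝕄 (fun t => sintegral (m t) f) = sintegral κ f := by
  obtain ⟨s, hs_le, hs_lim⟩ := exists_simpleFunc_tendsto_abs_le hf
  have hs_bound : ∀ n t, |sintegral (m t) (s n)| ≤ 2 * H t := fun n t =>
    calc |sintegral (m t) (s n)|
        ≤ ∫ x, |s n x| ∂(m t).totalVariation :=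
          abs_sintegral_le (sIntegrable_simpleFunc (m t) (s n))
      _ ≤ 2 * ∫ x, |f x| ∂(m t).totalVariation := (hfm t).integral_abs_le_mul (hs_le n)
      _ ≤ 2 * H t := mul_le_mul_of_nonneg_left (hfH t) zero_le_two
  have hlim_iterated : Tendsto (fun n => sintegral 𝕄 fun t => sintegral (m t) (s n)) atTop
      (𝓝 (sintegral 𝕄 fun t => sintegral (m t) f)) :=
    tendsto_sintegral_of_dominated_convergence
      (fun n => (hκ.sIntegrable_sintegral_simpleFunc (s n)).aestronglyMeasurable)
      (hH.const_mul 2) (fun n => ae_of_all _ (hs_bound n))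
      (ae_of_all _ fun t => (hfm t).tendsto_sintegral_simpleFunc hs_le hs_lim)
  have hlim_mixture : Tendsto (fun n => sintegral κ (s n)) atTop (𝓝 (sintegral κ f)) :=
    (hκ.sIntegrable hf hfm hH hfH).tendsto_sintegral_simpleFunc hs_le hs_lim
  simp only [hκ.sintegral_sintegral_simpleFunc] at hlim_iterated
  exact tendsto_nhds_unique hlim_iterated hlim_mixture

end IsMixture

theorem stmt9_general (hκ : IsMixture 𝕄 m κ)
    (hmeas : ∀ E : Set X, MeasurableSet E → Measurable fun t => m t E) (hf : Measurable f)
    (hfm : ∀ t, SIntegrable (m t) f) (hH : SIntegrable 𝕄 H)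
    (hfH : ∀ t, ∫ x, |f x| ∂(m t).totalVariation ≤ H t) :
    Measurable (fun t => sintegral (m t) f) ∧
    SIntegrable 𝕄 (fun t => sintegral (m t) f) ∧
    SIntegrable κ f ∧
    sintegral 𝕄 (fun t => sintegral (m t) f) = sintegral κ f := by
  have hmeas_f : Measurable fun t => sintegral (m t) f := measurable_sintegral hmeas hf hfm
  have hf_le : ∀ t, |sintegral (m t) f| ≤ H t := fun t => (abs_sintegral_le (hfm t)).trans (hfH t)
  exact ⟨hmeas_f, hH.mono' hmeas_f.aestronglyMeasurable (ae_of_all _ hf_le),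
    hκ.sIntegrable hf hfm hH hfH, hκ.sintegral_sintegral hf hfm hH hfH⟩

end Mixture

/-- With `m t` all supported by `B` with `‖m t‖ ≤ γ`, `f` measurable with
`|f| ≤ β` on `B`, and `κ` the signed measure `E ↦ ∫_T (m t)(E) d𝕄(t)`, the function
`t ↦ ∫ f d(m t)` is measurable and `𝕄`-integrable, and
`∫_T (∫_X f d(m t)) d𝕄(t) = ∫_X f dκ`. -/
theorem stmt9 {T X : Type*} [MeasurableSpace T] [MeasurableSpace X]
    (𝕄 : SignedMeasure T) (m : T → SignedMeasure X)
    (hmeas : ∀ E : Set X, MeasurableSet E → Measurable fun t => m t E)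
    (B : Set X) (γ β : ℝ) (hγ : 0 < γ) (hβ : 0 < β)
    (hsupp : ∀ t, ∃ ν : SignedMeasure B, m t = ν.map (Subtype.val : B → X))
    (hbound : ∀ t, tvNorm (m t) ≤ γ)
    (f : X → ℝ) (hf : Measurable f) (hfB : ∀ x ∈ B, |f x| ≤ β)
    (κ : SignedMeasure X)
    (hκ : ∀ E : Set X, MeasurableSet E → κ E = sintegral 𝕄 fun t => m t E) :
    Measurable (fun t => sintegral (m t) f) ∧
    SIntegrable 𝕄 (fun t => sintegral (m t) f) ∧
    sintegral 𝕄 (fun t => sintegral (m t) f) = sintegral κ f := by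
  have hfβ : ∀ t, ∀ᵐ x ∂(m t).totalVariation, |f x| ≤ β := fun t =>
    ae_totalVariation_of_eq_map_subtype_val (hsupp t) (measurableSet_le hf.abs measurable_const) hfB
  obtain ⟨hmeas_f, hint, -, heq⟩ := stmt9_general (isMixture_of_tvNorm_le hmeas hbound hκ) hmeas hf
    (fun t => sIntegrable_of_ae_abs_le hf (hfβ t)) (integrable_const (β * γ)) fun t =>
      (integral_abs_le_mul_tvNorm (hfβ t)).trans (mul_le_mul_of_nonneg_left (hbound t) hβ.le)
  exact ⟨hmeas_f, hint, heq⟩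
end
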